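/- Let K ≥ 1, let l_1,…,l_K be positive integers with l_1 + … + l_K = N, let r_1,…,r_K be real numbers, and let S ⊆ ℤ. Let v ∈ ℝ^N be the concatenation of the K blocks (r_j + (l_j − 1 − 2m)/(2l_j))_{m=0,…,l_j−1}. Then for every real q with 0 < q < 1: ∑ over k ∈ ℤ^N with k_1+…+k_N ∈ S of q^((1/2)·∑_{i=1}^N (v_i+k_i)²) equals [∏_{j=1}^K q^((l_j²−1)/(24 l_j)) · ∏_{k=1}^∞ (1−q^k)^{l_j} / ∏_{k=1}^∞ (1−q^(k/l_j))] · [∑ over n ∈ ℤ^K with n_1+…+n_K ∈ S of q^(∑_{j=1}^K (n_j + l_j r_j)²/(2 l_j))]. -/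

import Mathlib

open scoped BigOperators

/-!
The lattice sum splits over the block sums `n_j` of `k`, and for fixed `n` it is a product over the
blocks. The centred progression `(l - 1 - 2m) / (2l)` is translated by `1 / l` when it is rotated
cyclically and its wrapped-around entry is raised by one, so raising the sum of a block by one
amounts to replacing `r` by `r + 1 / l`. Completing the square, the block contributes
`q ^ ((n + l r)² / (2l))` times a constant `c_l(q)`, the value at `r = n = 0`.

To find `c_l(q)`, sum the case `r = 0` over all `n`: `c_l(q) ∑ q ^ (n² / (2l))` is a product of `l`
one-dimensional theta series, one for each entry of the progression. Apply Jacobi's triple product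
to each of them, and to `∑ q ^ (n² / (2l))` with base `q ^ (1 / l)`. The infinite products with base
`q` are the residue classes mod `l` of the one with base `q ^ (1 / l)`, so everything cancels except
the eta quotient. The triple product itself is the termwise limit of the `q`-binomial theorem, by
Tannery's theorem.
-/

open Filter Topology
open scoped ENNReal

section qPochhammer

/-- The finite `q`-Pochhammer symbol `(a; q)_n = ∏_{i < n} (1 - a q ^ i)`. -/
def qPochhammer {R : Type*} [CommRing R] (a q : R) (n : ℕ) : R :=
  ∏ i ∈ Finset.range n, (1 - a * q ^ i)

/-- The infinite `q`-Pochhammer symbol `(a; q)_∞`. The Euler product `∏_{k ≥ 1} (1 - q ^ k)` is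
the case `a = q`. Like every `tprod`, it is `1` when the product does not converge. -/
noncomputable def qPochhammerInf {R : Type*} [CommRing R] [TopologicalSpace R] (a q : R) : R :=
  ∏' i : ℕ, (1 - a * q ^ i)

section CommRing

variable {R : Type*} [CommRing R] (a q : R)

@[simp]
lemma qPochhammer_zero : qPochhammer a q 0 = 1 := Finset.prod_range_zero _

lemma qPochhammer_succ (n : ℕ) :
    qPochhammer a q (n + 1) = qPochhammer a q n * (1 - a * q ^ n) :=
  Finset.prod_range_succ _ n

lemma qPochhammer_add (m n : ℕ) :
    qPochhammer a q (m + n) = qPochhammer a q m * qPochhammer (a * q ^ m) q n := by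
  simp only [qPochhammer, Finset.prod_range_add, pow_add, mul_assoc]

lemma qPochhammer_succ' (n : ℕ) :
    qPochhammer a q (n + 1) = (1 - a) * qPochhammer (a * q) q n := by
  rw [add_comm, qPochhammer_add]
  simp [qPochhammer]

lemma qPochhammer_mul_eq_prod (n l : ℕ) :
    qPochhammer a q (n * l) = ∏ i ∈ Finset.range l, qPochhammer (a * q ^ i) (q ^ l) n := by
  induction n with
  | zero => simp
  | succ n ih =>
    simp only [qPochhammer_succ, Finset.prod_mul_distrib, ← ih, add_mul, one_mul, qPochhammer_add]
    congr 1
    exact Finset.prod_congr rfl fun i _ => by ring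

end CommRing

lemma qPochhammer_div_pow {K : Type*} [Field K] {a q : K} (ha : a ≠ 0) (hq : q ≠ 0) (n : ℕ) :
    qPochhammer (a / q ^ n) q n =
      (-a) ^ n / q ^ (n + 1).choose 2 * qPochhammer (q / a) q n := by
  induction n with
  | zero => simp
  | succ n ih =>
    have hshift : a / q ^ (n + 1) * q = a / q ^ n := by
      rw [pow_succ]
      field_simp
    have hchoose : (n + 1 + 1).choose 2 = n + 1 + (n + 1).choose 2 := by
      rw [Nat.choose_succ_succ', Nat.choose_one_right]
    rw [qPochhammer_succ', hshift, ih, qPochhammer_succ, hchoose]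
    field_simp
    ring

section NormedRing

variable {R : Type*} [NormedCommRing R] [NormOneClass R] [CompleteSpace R] (a : R) {q : R}

lemma multipliable_one_sub_mul_pow (hq : ‖q‖ < 1) : Multipliable fun i : ℕ => 1 - a * q ^ i := by
  have hsum : Summable fun i : ℕ => ‖-(a * q ^ i)‖ := by
    simp only [norm_neg]
    exact ((summable_norm_geometric_of_norm_lt_one hq).mul_left ‖a‖).of_nonneg_of_le
      (fun _ => norm_nonneg _) fun i => norm_mul_le a (q ^ i)
  simpa only [sub_eq_add_neg] using multipliable_one_add_of_summable hsum

lemma tendsto_qPochhammer (hq : ‖q‖ < 1) :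
    Tendsto (qPochhammer a q) atTop (𝓝 (qPochhammerInf a q)) :=
  (multipliable_one_sub_mul_pow a hq).hasProd.tendsto_prod_nat

lemma qPochhammerInf_eq_prod (hq : ‖q‖ < 1) {l : ℕ} (hl : l ≠ 0) :
    qPochhammerInf a q = ∏ i ∈ Finset.range l, qPochhammerInf (a * q ^ i) (q ^ l) := by
  have hql : ‖q ^ l‖ < 1 := (norm_pow_le' q hl.bot_lt).trans_lt (pow_lt_one₀ (norm_nonneg q) hq hl)
  have hleft : Tendsto (fun n => qPochhammer a q (n * l)) atTop (𝓝 (qPochhammerInf a q)) :=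
    (tendsto_qPochhammer a hq).comp (tendsto_id.atTop_mul_const' hl.bot_lt)
  refine tendsto_nhds_unique hleft ?_
  simp only [qPochhammer_mul_eq_prod]
  exact tendsto_finsetProd _ fun i _ => tendsto_qPochhammer _ hql

lemma tprod_one_sub_pow_succ_pow (hq : ‖q‖ < 1) (l : ℕ) :
    ∏' k : ℕ, (1 - q ^ (k + 1)) ^ l = qPochhammerInf q q ^ l := by
  simp only [pow_succ', qPochhammerInf]
  exact (multipliable_one_sub_mul_pow q hq).tprod_pow l

end NormedRing

section Real

variable {a q : ℝ}

lemma mul_pow_lt_one_of_lt_one (ha : a < 1) (hq0 : 0 ≤ q) (hq1 : q ≤ 1) (i : ℕ) :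
    a * q ^ i < 1 := by
  rcases le_total a 0 with h | h
  · exact (mul_nonpos_of_nonpos_of_nonneg h (pow_nonneg hq0 i)).trans_lt one_pos
  · exact (mul_le_of_le_one_right h (pow_le_one₀ hq0 hq1)).trans_lt ha

lemma qPochhammer_pos (ha : a < 1) (hq0 : 0 ≤ q) (hq1 : q ≤ 1) (n : ℕ) :
    0 < qPochhammer a q n :=
  Finset.prod_pos fun i _ => sub_pos.2 (mul_pow_lt_one_of_lt_one ha hq0 hq1 i)

lemma qPochhammer_antitone (ha0 : 0 ≤ a) (ha1 : a < 1) (hq0 : 0 ≤ q) (hq1 : q ≤ 1) :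
    Antitone (qPochhammer a q) := by
  refine antitone_nat_of_succ_le fun n => ?_
  rw [qPochhammer_succ]
  exact mul_le_of_le_one_right (qPochhammer_pos ha1 hq0 hq1 n).le
    (sub_le_self 1 (mul_nonneg ha0 (pow_nonneg hq0 n)))

lemma qPochhammerInf_pos (ha : a < 1) (hq0 : 0 ≤ q) (hq1 : q < 1) : 0 < qPochhammerInf a q := by
  have hq : ‖q‖ < 1 := by rwa [Real.norm_of_nonneg hq0]
  have hnonneg : 0 ≤ qPochhammerInf a q :=
    ge_of_tendsto' (tendsto_qPochhammer a hq) fun n => (qPochhammer_pos ha hq0 hq1.le n).le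
  refine hnonneg.lt_of_ne' ?_
  have hsum : Summable fun i : ℕ => ‖-(a * q ^ i)‖ := by
    simpa only [norm_neg] using ((summable_geometric_of_lt_one hq0 hq1).mul_left a).norm
  have hfactor (i : ℕ) : 1 + -(a * q ^ i) ≠ 0 := by
    rw [← sub_eq_add_neg]
    exact (sub_pos.2 (mul_pow_lt_one_of_lt_one ha hq0 hq1.le i)).ne'
  simpa only [sub_eq_add_neg, qPochhammerInf] using tprod_one_add_ne_zero_of_summable hfactor hsum

lemma qPochhammerInf_le (ha0 : 0 ≤ a) (ha1 : a < 1) (hq0 : 0 ≤ q) (hq1 : q < 1) (n : ℕ) :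
    qPochhammerInf a q ≤ qPochhammer a q n :=
  (qPochhammer_antitone ha0 ha1 hq0 hq1.le).le_of_tendsto
    (tendsto_qPochhammer a (by rwa [Real.norm_of_nonneg hq0])) n

end Real

end qPochhammer

section gaussBinom

/-- The Gaussian binomial coefficient, defined by the `q`-Pascal recursion so that it makes sense
for every `q`, roots of unity included. -/
def gaussBinom {R : Type*} [Semiring R] (q : R) : ℕ → ℕ → R
  | _, 0 => 1
  | 0, _ + 1 => 0
  | n + 1, k + 1 => gaussBinom q n k + q ^ (k + 1) * gaussBinom q n (k + 1)

section Semiring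

variable {R : Type*} [Semiring R] (q : R)

@[simp]
lemma gaussBinom_zero_right (n : ℕ) : gaussBinom q n 0 = 1 := by
  cases n <;> rfl

lemma gaussBinom_succ_succ (n k : ℕ) :
    gaussBinom q (n + 1) (k + 1) = gaussBinom q n k + q ^ (k + 1) * gaussBinom q n (k + 1) :=
  rfl

lemma gaussBinom_eq_zero_of_lt {n k : ℕ} (h : n < k) : gaussBinom q n k = 0 := by
  induction n generalizing k with
  | zero => cases k with
    | zero => exact absurd h (lt_irrefl 0)
    | succ k => rfl
  | succ n ih => cases k with
    | zero => exact absurd h (Nat.not_lt_zero _)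
    | succ k => rw [gaussBinom_succ_succ, ih (by lia), ih (by lia), mul_zero, add_zero]

end Semiring

variable {R : Type*} [CommRing R] (q : R)

lemma gaussBinom_mul_qPochhammer (m n : ℕ) :
    gaussBinom q (m + n) m * (qPochhammer q q m * qPochhammer q q n) = qPochhammer q q (m + n) := by
  induction m generalizing n with
  | zero => simp
  | succ m ihm => induction n with
    | zero =>
      have h := ihm 0
      rw [add_zero] at h ⊢
      rw [gaussBinom_succ_succ, gaussBinom_eq_zero_of_lt q m.lt_succ_self, qPochhammer_succ]
      linear_combination (1 - q * q ^ m) * h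
    | succ n ihn =>
      have hm := ihm (n + 1)
      rw [show m + 1 + n = m + (n + 1) by lia] at ihn
      rw [show m + 1 + (n + 1) = m + (n + 1) + 1 by lia, gaussBinom_succ_succ,
        qPochhammer_succ _ _ (m + (n + 1))]
      simp only [qPochhammer_succ _ _ m, qPochhammer_succ _ _ n] at hm ihn ⊢
      linear_combination (1 - q * q ^ m) * hm + q ^ (m + 1) * (1 - q * q ^ n) * ihn

theorem q_binomial_theorem (x : R) (n : ℕ) :
    qPochhammer (-x) q n =
      ∑ j ∈ Finset.range (n + 1), gaussBinom q n j * q ^ j.choose 2 * x ^ j := by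
  induction n generalizing x with
  | zero => simp
  | succ n ih =>
    have hchoose (j : ℕ) : (j + 1).choose 2 = j + j.choose 2 := by
      rw [Nat.choose_succ_succ', Nat.choose_one_right]
    rw [qPochhammer_succ', neg_mul, ih, Finset.sum_range_succ' _ (n + 1)]
    have hfst : ∑ j ∈ Finset.range (n + 1),
          gaussBinom q n j * q ^ (j + 1).choose 2 * x ^ (j + 1) =
        x * ∑ j ∈ Finset.range (n + 1), gaussBinom q n j * q ^ j.choose 2 * (x * q) ^ j := by
      rw [Finset.mul_sum]
      exact Finset.sum_congr rfl fun j _ => by rw [hchoose]; ring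
    have hsnd : ∑ j ∈ Finset.range (n + 1),
          q ^ (j + 1) * gaussBinom q n (j + 1) * q ^ (j + 1).choose 2 * x ^ (j + 1) + 1 =
        ∑ j ∈ Finset.range (n + 1), gaussBinom q n j * q ^ j.choose 2 * (x * q) ^ j := by
      rw [Finset.sum_range_succ, gaussBinom_eq_zero_of_lt q n.lt_succ_self,
        Finset.sum_range_succ' _ n]
      simp only [mul_zero, zero_mul, add_zero, gaussBinom_zero_right, Nat.choose_zero_succ,
        pow_zero, mul_one]
      exact congrArg (· + 1) (Finset.sum_congr rfl fun j _ => by ring)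
    simp only [gaussBinom_succ_succ, gaussBinom_zero_right, add_mul, Finset.sum_add_distrib,
      Nat.choose_zero_succ, pow_zero, mul_one]
    rw [add_assoc, hfst, hsnd]
    ring

end gaussBinom

theorem jacobi_triple_product_finite {K : Type*} [Field K] {q y : K} (hq : q ≠ 0)
    (hy : y ≠ 0) (m : ℕ) :
    y ^ m / q ^ (m + 1).choose 2 * (qPochhammer (-y) q m * qPochhammer (-(q / y)) q m) =
      ∑ j ∈ Finset.range (2 * m + 1),
        gaussBinom q (2 * m) j * q ^ j.choose 2 * (y / q ^ m) ^ j := by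
  have hcancel : -(y / q ^ m) * q ^ m = -y := by
    rw [neg_mul, div_mul_cancel₀ y (pow_ne_zero m hq)]
  rw [← q_binomial_theorem, two_mul, qPochhammer_add, hcancel, ← neg_div (q ^ m) y,
    qPochhammer_div_pow (neg_ne_zero.2 hy) hq, neg_neg, div_neg]
  ring

section JacobiTripleProduct

variable {q : ℝ}

lemma gaussBinom_eq_div (hq0 : 0 ≤ q) (hq1 : q < 1) (m n : ℕ) :
    gaussBinom q (m + n) m =
      qPochhammer q q (m + n) / (qPochhammer q q m * qPochhammer q q n) := by
  have hpos := qPochhammer_pos hq1 hq0 hq1.le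
  rw [eq_div_iff (mul_pos (hpos m) (hpos n)).ne', gaussBinom_mul_qPochhammer]

lemma rpow_sq_half_eq_pow_choose (hq : 0 < q) (u : ℝ) (m j : ℕ) :
    q ^ ((u + (j - m)) ^ 2 / 2) =
      q ^ ((m - u) ^ 2 / 2) * (q ^ j.choose 2 * (q ^ (1 / 2 + u) / q ^ m) ^ j) := by
  rw [← Real.rpow_natCast q (j.choose 2), ← Real.rpow_natCast q m, ← Real.rpow_sub hq,
    ← Real.rpow_mul_natCast hq.le, ← Real.rpow_add hq, ← Real.rpow_add hq,
    Nat.cast_choose_two]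
  congr 1
  ring

lemma sum_gaussBinom_mul_rpow (hq : 0 < q) (u : ℝ) (m : ℕ) :
    ∑ j ∈ Finset.range (2 * m + 1), gaussBinom q (2 * m) j * q ^ ((u + (j - m)) ^ 2 / 2) =
      q ^ (u ^ 2 / 2) *
        (qPochhammer (-q ^ (1 / 2 + u)) q m * qPochhammer (-q ^ (1 / 2 - u)) q m) := by
  have hqy : q / q ^ (1 / 2 + u) = q ^ (1 / 2 - u) := by
    rw [div_eq_iff (by positivity), ← Real.rpow_add hq]
    norm_num
  have hprefactor : q ^ (u ^ 2 / 2) =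
      q ^ ((m - u) ^ 2 / 2) * ((q ^ (1 / 2 + u)) ^ m / q ^ (m + 1).choose 2) := by
    rw [← Real.rpow_natCast q, ← Real.rpow_mul_natCast hq.le, ← Real.rpow_sub hq,
      ← Real.rpow_add hq, Nat.cast_choose_two]
    congr 1
    push_cast
    ring
  rw [hprefactor, ← hqy, mul_assoc,
    jacobi_triple_product_finite hq.ne' (Real.rpow_pos_of_pos hq _).ne', Finset.mul_sum]
  refine Finset.sum_congr rfl fun j _ => ?_
  rw [rpow_sq_half_eq_pow_choose hq]
  ring

lemma sum_Icc_rpow_eq_qPochhammer (hq0 : 0 < q) (hq1 : q < 1) (u : ℝ) (m : ℕ) :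
    ∑ k ∈ Finset.Icc (-m : ℤ) m, qPochhammer q q (2 * m) /
        (qPochhammer q q (m + k).toNat * qPochhammer q q (m - k).toNat) * q ^ ((u + k) ^ 2 / 2) =
      q ^ (u ^ 2 / 2) *
        (qPochhammer (-q ^ (1 / 2 + u)) q m * qPochhammer (-q ^ (1 / 2 - u)) q m) := by
  rw [← sum_gaussBinom_mul_rpow hq0]
  refine Finset.sum_nbij' (fun k => (m + k).toNat) (fun j => (j : ℤ) - m)
    (fun k hk => ?_) (fun j hj => ?_) (fun k hk => ?_) (fun j hj => ?_) fun k hk => ?_ <;>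
    simp only [Finset.mem_Icc, Finset.mem_range] at *
  iterate 4 lia
  have hsum : 2 * m = (m + k).toNat + (m - k).toNat := by lia
  have hindex : (k : ℝ) = ((m + k).toNat : ℝ) - m := by
    rw [← Int.cast_natCast (m + k).toNat, Int.toNat_of_nonneg (by lia)]
    push_cast
    ring
  rw [hsum, gaussBinom_eq_div hq0.le hq1, ← hindex]

lemma summable_rpow_sq_nat (hq0 : 0 < q) (hq1 : q < 1) (u : ℝ) :
    Summable fun n : ℕ => q ^ ((u + n) ^ 2 / 2) := by
  have hratio (n : ℕ) : ‖q ^ ((u + ↑(n + 1)) ^ 2 / 2)‖ / ‖q ^ ((u + n) ^ 2 / 2)‖ =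
      q ^ (u + 1 / 2) * q ^ n := by
    rw [Real.norm_of_nonneg (by positivity), Real.norm_of_nonneg (by positivity),
      ← Real.rpow_sub hq0, ← Real.rpow_natCast q n, ← Real.rpow_add hq0]
    congr 1
    push_cast
    ring
  refine summable_of_ratio_test_tendsto_lt_one (l := 0) one_pos
    (Eventually.of_forall fun n => by positivity) ?_
  simpa only [hratio, mul_zero] using
    (tendsto_pow_atTop_nhds_zero_of_lt_one hq0.le hq1).const_mul (q ^ (u + 1 / 2))

lemma summable_rpow_sq_int (hq0 : 0 < q) (hq1 : q < 1) (u : ℝ) :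
    Summable fun k : ℤ => q ^ ((u + k) ^ 2 / 2) := by
  refine .of_nat_of_neg (by simpa using summable_rpow_sq_nat hq0 hq1 u) ?_
  refine (summable_rpow_sq_nat hq0 hq1 (-u)).congr fun n => ?_
  push_cast
  ring_nf

lemma tendsto_qPochhammer_ratio (hq0 : 0 < q) (hq1 : q < 1) (k : ℤ) :
    Tendsto (fun m : ℕ => qPochhammer q q (2 * m) /
        (qPochhammer q q (m + k).toNat * qPochhammer q q (m - k).toNat))
      atTop (𝓝 (qPochhammerInf q q)⁻¹) := by
  have hlim : Tendsto (qPochhammer q q) atTop (𝓝 (qPochhammerInf q q)) :=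
    tendsto_qPochhammer q (by rwa [Real.norm_of_nonneg hq0.le])
  have hpos := qPochhammerInf_pos hq1 hq0.le hq1
  have hshift (c : ℤ) : Tendsto (fun m : ℕ => (m + c).toNat) atTop atTop :=
    tendsto_atTop.2 fun b => by
      filter_upwards [eventually_ge_atTop (b + c.natAbs)] with m hm
      lia
  have hdouble : Tendsto (fun m : ℕ => 2 * m) atTop atTop :=
    tendsto_id.const_mul_atTop' two_pos
  have h := (hlim.comp hdouble).div ((hlim.comp (hshift k)).mul (hlim.comp (hshift (-k))))
    (mul_pos hpos hpos).ne'
  rwa [div_mul_cancel_left₀ hpos.ne'] at h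

lemma qPochhammer_ratio_le (hq0 : 0 ≤ q) (hq1 : q < 1) (n i j : ℕ) :
    qPochhammer q q n / (qPochhammer q q i * qPochhammer q q j) ≤
      (qPochhammerInf q q * qPochhammerInf q q)⁻¹ := by
  have hpos := qPochhammerInf_pos hq1 hq0 hq1
  have hle := qPochhammerInf_le hq0 hq1 hq0 hq1
  have hone : qPochhammer q q n ≤ 1 := by
    simpa using qPochhammer_antitone hq0 hq1 hq0 hq1.le n.zero_le
  rw [← one_div]
  exact div_le_div₀ zero_le_one hone (mul_pos hpos hpos)
    (mul_le_mul (hle i) (hle j) hpos.le (hpos.le.trans (hle i)))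

lemma tendsto_sum_qPochhammer_ratio_mul (hq0 : 0 < q) (hq1 : q < 1) {f : ℤ → ℝ}
    (hf : Summable fun k => ‖f k‖) :
    Tendsto (fun m : ℕ => ∑ k ∈ Finset.Icc (-m : ℤ) m, qPochhammer q q (2 * m) /
        (qPochhammer q q (m + k).toNat * qPochhammer q q (m - k).toNat) * f k)
      atTop (𝓝 ((qPochhammerInf q q)⁻¹ * ∑' k, f k)) := by
  set c : ℕ → ℤ → ℝ := fun m k => qPochhammer q q (2 * m) /
    (qPochhammer q q (m + k).toNat * qPochhammer q q (m - k).toNat)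
  let F (m : ℕ) : ℤ → ℝ := (↑(Finset.Icc (-m : ℤ) m) : Set ℤ).indicator fun k => c m k * f k
  have hpointwise (k : ℤ) : Tendsto (F · k) atTop (𝓝 ((qPochhammerInf q q)⁻¹ * f k)) := by
    refine ((tendsto_qPochhammer_ratio hq0 hq1 k).mul_const _).congr' ?_
    filter_upwards [eventually_ge_atTop k.natAbs] with m hm
    have hk : k ∈ Finset.Icc (-m : ℤ) m := Finset.mem_Icc.2 (by lia)
    exact (Set.indicator_of_mem (Finset.mem_coe.2 hk) fun k => c m k * f k).symm
  have hbound (m : ℕ) (k : ℤ) :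
      ‖F m k‖ ≤ (qPochhammerInf q q * qPochhammerInf q q)⁻¹ * ‖f k‖ := by
    have hpos := qPochhammer_pos hq1 hq0.le hq1.le
    have hc_nonneg : 0 ≤ c m k := div_nonneg (hpos _).le (mul_pos (hpos _) (hpos _)).le
    refine (norm_indicator_le_norm_self _ k).trans ?_
    rw [norm_mul, Real.norm_of_nonneg hc_nonneg]
    exact mul_le_mul_of_nonneg_right (qPochhammer_ratio_le hq0.le hq1 _ _ _) (norm_nonneg _)
  have hlim := tendsto_tsum_of_dominated_convergence (hf.mul_left _) hpointwise
    (Eventually.of_forall hbound)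
  rw [tsum_mul_left] at hlim
  exact hlim.congr fun m => (sum_eq_tsum_indicator _ _).symm

theorem jacobi_triple_product (hq0 : 0 < q) (hq1 : q < 1) (u : ℝ) :
    ∑' k : ℤ, q ^ ((u + k) ^ 2 / 2) = q ^ (u ^ 2 / 2) * (qPochhammerInf q q *
      (qPochhammerInf (-q ^ (1 / 2 + u)) q * qPochhammerInf (-q ^ (1 / 2 - u)) q)) := by
  have hq : ‖q‖ < 1 := by rwa [Real.norm_of_nonneg hq0.le]
  have hseries := tendsto_sum_qPochhammer_ratio_mul hq0 hq1 (summable_rpow_sq_int hq0 hq1 u).norm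
  simp only [sum_Icc_rpow_eq_qPochhammer hq0 hq1] at hseries
  have h := tendsto_nhds_unique hseries
    (((tendsto_qPochhammer _ hq).mul (tendsto_qPochhammer _ hq)).const_mul _)
  rw [inv_mul_eq_iff_eq_mul₀ (qPochhammerInf_pos hq1 hq0.le hq1).ne'] at h
  rw [h, mul_left_comm]

end JacobiTripleProduct

section ENNReal

lemma ennreal_rpow_sum {q : ℝ≥0∞} (hq0 : q ≠ 0) (hq : q ≠ ∞) {ι : Type*} (s : Finset ι)
    (f : ι → ℝ) : q ^ ∑ i ∈ s, f i = ∏ i ∈ s, q ^ f i := by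
  induction s using Finset.cons_induction with
  | empty => simp
  | cons i s hi ih => rw [Finset.sum_cons, Finset.prod_cons, ENNReal.rpow_add _ _ hq0 hq, ih]

lemma toReal_tsum_ofReal_rpow {q : ℝ} (hq : 0 < q) {α : Type*} (f : α → ℝ) :
    (∑' i, ENNReal.ofReal q ^ f i).toReal = ∑' i, q ^ f i := by
  have hpow (i : α) : ENNReal.ofReal q ^ f i = ENNReal.ofReal (q ^ f i) :=
    ENNReal.ofReal_rpow_of_pos hq
  simp only [hpow]
  rw [ENNReal.tsum_toReal_eq fun _ => ENNReal.ofReal_ne_top]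
  exact tsum_congr fun i => ENNReal.toReal_ofReal (Real.rpow_nonneg hq.le _)

lemma tsum_pi_fin_prod {n : ℕ} {α : Fin n → Type*} (f : ∀ i, α i → ℝ≥0∞) :
    ∑' x : (∀ i, α i), ∏ i, f i (x i) = ∏ i, ∑' a, f i a := by
  induction n with
  | zero => simp
  | succ n ih =>
    rw [← (Fin.consEquiv α).tsum_eq, ENNReal.tsum_prod', Fin.prod_univ_succ, ← ih,
      ← ENNReal.tsum_mul_right]
    simp only [← ENNReal.tsum_mul_left, Fin.prod_univ_succ, Fin.consEquiv_apply, Fin.cons_zero,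
      Fin.cons_succ]

lemma tsum_pi_prod {ι : Type*} [Fintype ι] {α : ι → Type*} (f : ∀ i, α i → ℝ≥0∞) :
    ∑' x : (∀ i, α i), ∏ i, f i (x i) = ∏ i, ∑' a, f i a := by
  let e := (Fintype.equivFin ι).symm
  rw [← e.prod_comp, ← tsum_pi_fin_prod, ← (Equiv.piCongrLeft α e).tsum_eq]
  refine tsum_congr fun x => ?_
  rw [← e.prod_comp]
  simp only [Equiv.piCongrLeft_apply_apply]

lemma tsum_pi_fiberwise {ι : Type*} [Fintype ι] {α β : ι → Type*} (g : ∀ i, α i → β i)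
    (w : ∀ i, α i → ℝ≥0∞) (T : Set (∀ i, β i)) :
    ∑' x : {x : ∀ i, α i // (fun i => g i (x i)) ∈ T}, ∏ i, w i (x.1 i) =
      ∑' b : T, ∏ i, ∑' a : {a // g i a = b.1 i}, w i a := by
  classical
  let A : Set (∀ i, α i) := {x | (fun i => g i (x i)) ∈ T}
  have hfiber (b : ∀ i, β i) : ∏ i, ∑' a : {a // g i a = b i}, w i a =
      ∑' x : ∀ i, α i, if (fun i => g i (x i)) = b then ∏ i, w i (x i) else 0 := by
    calc ∏ i, ∑' a : {a // g i a = b i}, w i a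
        = ∏ i, ∑' a, if g i a = b i then w i a else 0 :=
          Finset.prod_congr rfl fun i _ => tsum_subtype {a | g i a = b i} (w i)
      _ = _ := by simp only [← tsum_pi_prod, Fintype.prod_ite_zero, funext_iff]
  have hcollapse (x : ∀ i, α i) :
      ∑' b : T, (if (fun i => g i (x i)) = b.1 then ∏ i, w i (x i) else 0) =
        A.indicator (fun x => ∏ i, w i (x i)) x := by
    by_cases hx : x ∈ A
    · rw [Set.indicator_of_mem hx, tsum_eq_single ⟨_, hx⟩, if_pos rfl]
      exact fun b hb => if_neg fun h => hb (Subtype.ext h.symm)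
    · rw [Set.indicator_of_notMem hx, ENNReal.tsum_eq_zero]
      exact fun b => if_neg fun h : (fun i => g i (x i)) = b.1 => hx (h.symm ▸ b.2 : _ ∈ T)
  simp only [hfiber]
  rw [ENNReal.tsum_comm, tsum_congr hcollapse]
  exact tsum_subtype A fun x => ∏ i, w i (x i)

end ENNReal

section blockTheta

/-- The `i`-th component `(l - 1 - 2i) / (2l)` of the centred arithmetic progression of length `l`
and step `-1/l`, which is the Weyl vector of `A_{l-1}` divided by `l`. -/
noncomputable def blockShift (l : ℕ) (i : Fin l) : ℝ := ((l : ℝ) - 1 - 2 * i.val) / (2 * l)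

/-- The contribution `∑ q ^ ((r + blockShift l + k)² / 2)` to the theta function of `ℤ ^ l` of the
coset of `A_{l-1}` on which the coordinates of `k` sum to `n`. It takes values in `ℝ≥0∞`, so that
series can be rearranged freely. -/
noncomputable def blockTheta (q : ℝ≥0∞) (l : ℕ) (r : ℝ) (n : ℤ) : ℝ≥0∞ :=
  ∑' k : {k : Fin l → ℤ // ∑ i, k i = n},
    q ^ ((1 / 2 : ℝ) * ∑ i, (r + blockShift l i + k.1 i) ^ 2)

lemma blockShift_rev {l : ℕ} (i : Fin l) : blockShift l i.rev = -blockShift l i := by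
  simp only [blockShift, Fin.val_rev, Nat.cast_sub (show i.val + 1 ≤ l from i.isLt)]
  push_cast
  ring

lemma sum_blockShift (l : ℕ) : ∑ i, blockShift l i = 0 := by
  have h : ∑ i, blockShift l (Fin.rev i) = ∑ i, blockShift l i :=
    Equiv.sum_comp Fin.revPerm (blockShift l)
  simp only [blockShift_rev, Finset.sum_neg_distrib] at h
  linarith

lemma sum_range_sub_two_mul_sq (c : ℝ) (n : ℕ) :
    ∑ i ∈ Finset.range n, (c - 2 * i) ^ 2 =
      n * c ^ 2 - 2 * c * n * (n - 1) + 2 * (n - 1) * n * (2 * n - 1) / 3 := by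
  induction n with
  | zero => simp
  | succ n ih =>
    rw [Finset.sum_range_succ, ih]
    push_cast
    ring

lemma sum_blockShift_sq {l : ℕ} (hl : l ≠ 0) :
    ∑ i, blockShift l i ^ 2 / 2 = ((l : ℝ) ^ 2 - 1) / (24 * l) := by
  have hl' : (l : ℝ) ≠ 0 := Nat.cast_ne_zero.2 hl
  simp only [blockShift, div_pow]
  rw [← Finset.sum_div, ← Finset.sum_div,
    Fin.sum_univ_eq_sum_range (fun i => ((l : ℝ) - 1 - 2 * i) ^ 2), sum_range_sub_two_mul_sq]
  field_simp
  ring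

/-- The bijection `(k_0, …, k_l) ↦ (k_1, …, k_l, k_0 + 1)` of `ℤ ^ (l + 1)`. It raises the
coordinate sum by one, and translates `blockShift (l + 1) + k` by a constant vector up to a
rotation of the coordinates. -/
def cyclicShift (l : ℕ) : (Fin (l + 1) → ℤ) ≃ (Fin (l + 1) → ℤ) :=
  ((finRotate (l + 1)).symm.arrowCongr (Equiv.refl ℤ)).trans
    (Equiv.addRight (Pi.single (Fin.last l) 1))

lemma cyclicShift_apply {l : ℕ} (k : Fin (l + 1) → ℤ) (i : Fin (l + 1)) :
    cyclicShift l k i = k (finRotate (l + 1) i) + Pi.single (M := fun _ => ℤ) (Fin.last l) 1 i :=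
  rfl

lemma sum_cyclicShift {l : ℕ} (k : Fin (l + 1) → ℤ) :
    ∑ i, cyclicShift l k i = ∑ i, k i + 1 := by
  simp only [cyclicShift_apply, Finset.sum_add_distrib, Equiv.sum_comp, Finset.sum_pi_single',
    Finset.mem_univ, if_true]

lemma blockShift_add_cyclicShift {l : ℕ} (k : Fin (l + 1) → ℤ) (i : Fin (l + 1)) :
    blockShift (l + 1) i + cyclicShift l k i =
      1 / ↑(l + 1) + blockShift (l + 1) (finRotate (l + 1) i) + k (finRotate (l + 1) i) := by
  have hl : (l : ℝ) + 1 ≠ 0 := by positivity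
  rw [cyclicShift_apply]
  by_cases hi : i = Fin.last l
  · subst hi
    simp only [blockShift, finRotate_last, Pi.single_eq_same, Fin.val_last, Fin.val_zero]
    push_cast
    field_simp
    ring
  · simp only [blockShift, Pi.single_eq_of_ne hi, coe_finRotate_of_ne_last hi]
    push_cast
    field_simp
    ring

lemma blockTheta_add_one (q : ℝ≥0∞) {l : ℕ} (hl : l ≠ 0) (r : ℝ) (n : ℤ) :
    blockTheta q l r (n + 1) = blockTheta q l (r + 1 / l) n := by
  obtain ⟨l, rfl⟩ := Nat.exists_eq_succ_of_ne_zero hl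
  let e : {k : Fin (l + 1) → ℤ // ∑ i, k i = n} ≃ {k : Fin (l + 1) → ℤ // ∑ i, k i = n + 1} :=
    (cyclicShift l).subtypeEquiv fun k => by rw [sum_cyclicShift, add_left_inj]
  rw [blockTheta, ← e.tsum_eq]
  refine tsum_congr fun k => ?_
  have hterm (i : Fin (l + 1)) : r + blockShift (l + 1) i + (e k).1 i =
      r + 1 / ↑(l + 1) + blockShift (l + 1) (finRotate (l + 1) i) + k.1 (finRotate (l + 1) i) := by
    rw [add_assoc, Equiv.subtypeEquiv_apply, blockShift_add_cyclicShift]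
    ring
  simp only [hterm]
  rw [Equiv.sum_comp (finRotate (l + 1))
    fun i => (r + 1 / ↑(l + 1) + blockShift (l + 1) i + (k.1 i : ℝ)) ^ 2]

lemma blockTheta_eq_blockTheta_zero (q : ℝ≥0∞) {l : ℕ} (hl : l ≠ 0) (r : ℝ) (n : ℤ) :
    blockTheta q l r n = blockTheta q l (r + n / l) 0 := by
  induction n using Int.induction_on generalizing r with
  | zero => simp
  | succ n ih =>
    rw [blockTheta_add_one q hl, ih]
    push_cast
    ring_nf
  | pred n ih =>
    have hstep := blockTheta_add_one q hl (r - 1 / l) (-(n : ℤ) - 1)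
    rw [sub_add_cancel, sub_add_cancel, ih] at hstep
    rw [← hstep]
    push_cast
    ring_nf

variable {q : ℝ≥0∞}

lemma blockTheta_zero_right (hq0 : q ≠ 0) (hq : q ≠ ∞) (l : ℕ) (r : ℝ) :
    blockTheta q l r 0 = blockTheta q l 0 0 * q ^ (l * r ^ 2 / 2) := by
  rw [blockTheta, blockTheta, ← ENNReal.tsum_mul_right]
  refine tsum_congr fun k => ?_
  have hk : ∑ i, (blockShift l i + k.1 i) = 0 := by
    rw [Finset.sum_add_distrib, sum_blockShift, ← Int.cast_sum, k.2, Int.cast_zero, add_zero]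
  have hsq : ∑ i, (r + blockShift l i + k.1 i) ^ 2 =
      ∑ i, (0 + blockShift l i + k.1 i) ^ 2 + l * r ^ 2 := by
    calc ∑ i, (r + blockShift l i + k.1 i) ^ 2
        = ∑ i, ((0 + blockShift l i + k.1 i) ^ 2 + r ^ 2 +
            2 * r * (blockShift l i + k.1 i)) :=
          Finset.sum_congr rfl fun i _ => by ring
      _ = _ := by
          simp only [Finset.sum_add_distrib, ← Finset.mul_sum] at hk ⊢
          simp [hk]
  rw [hsq, ← ENNReal.rpow_add _ _ hq0 hq]
  ring_nf

theorem blockTheta_eq_mul_rpow (hq0 : q ≠ 0) (hq : q ≠ ∞) {l : ℕ} (hl : l ≠ 0) (r : ℝ) (n : ℤ) :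
    blockTheta q l r n = blockTheta q l 0 0 * q ^ ((n + l * r) ^ 2 / (2 * l)) := by
  have hl' : (l : ℝ) ≠ 0 := Nat.cast_ne_zero.2 hl
  rw [blockTheta_eq_blockTheta_zero q hl, blockTheta_zero_right hq0 hq]
  congr 2
  field_simp
  ring

lemma prod_tsum_rpow_eq_mul_blockTheta (hq0 : q ≠ 0) (hq : q ≠ ∞) {l : ℕ} (hl : l ≠ 0) :
    ∏ i, ∑' k : ℤ, q ^ ((blockShift l i + k) ^ 2 / 2) =
      blockTheta q l 0 0 * ∑' n : ℤ, q ^ ((n : ℝ) ^ 2 / (2 * l)) := by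
  calc ∏ i, ∑' k : ℤ, q ^ ((blockShift l i + k) ^ 2 / 2)
      = ∑' k : Fin l → ℤ, q ^ ((1 / 2 : ℝ) * ∑ i, (0 + blockShift l i + k i) ^ 2) := by
        rw [← tsum_pi_prod]
        refine tsum_congr fun k => ?_
        rw [← ennreal_rpow_sum hq0 hq, ← Finset.sum_div]
        ring_nf
    _ = ∑' n : ℤ, blockTheta q l 0 n := 
        (ENNReal.tsum_fiberwise _ fun k : Fin l → ℤ => ∑ i, k i).symm
    _ = blockTheta q l 0 0 * ∑' n : ℤ, q ^ ((n : ℝ) ^ 2 / (2 * l)) := by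
        rw [tsum_congr (blockTheta_eq_mul_rpow hq0 hq hl 0), ENNReal.tsum_mul_left]
        simp only [mul_zero, add_zero]

theorem tsum_blockLattice_eq_prod_blockTheta_mul (hq0 : q ≠ 0) (hq : q ≠ ∞) {ι : Type*} [Fintype ι]
    {l : ι → ℕ} (hl : ∀ j, l j ≠ 0) (r : ι → ℝ) (T : Set (ι → ℤ)) :
    ∑' k : {k : ((j : ι) × Fin (l j)) → ℤ // (fun j => ∑ i, k ⟨j, i⟩) ∈ T},
        q ^ ((1 / 2 : ℝ) * ∑ i : (j : ι) × Fin (l j),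
          (r i.1 + blockShift (l i.1) i.2 + k.1 i) ^ 2) =
      (∏ j, blockTheta q (l j) 0 0) *
        ∑' n : T, q ^ ∑ j, (n.1 j + l j * r j) ^ 2 / (2 * l j) := by
  let e : {k : ((j : ι) × Fin (l j)) → ℤ // (fun j => ∑ i, k ⟨j, i⟩) ∈ T} ≃
      {k : ∀ j, Fin (l j) → ℤ // (fun j => ∑ i, k j i) ∈ T} :=
    (Equiv.piCurry fun _ _ => ℤ).subtypeEquiv fun _ => Iff.rfl
  calc
    _ = ∑' k : {k : ∀ j, Fin (l j) → ℤ // (fun j => ∑ i, k j i) ∈ T},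
          ∏ j, q ^ ((1 / 2 : ℝ) * ∑ i, (r j + blockShift (l j) i + k.1 j i) ^ 2) := by
        rw [← e.tsum_eq]
        refine tsum_congr fun k => ?_
        rw [← ennreal_rpow_sum hq0 hq, ← Finset.mul_sum, Fintype.sum_sigma]
        rfl
    _ = ∑' n : T, ∏ j, blockTheta q (l j) (r j) (n.1 j) :=
        tsum_pi_fiberwise (fun j (k : Fin (l j) → ℤ) => ∑ i, k i)
          (fun j k => q ^ ((1 / 2 : ℝ) * ∑ i, (r j + blockShift (l j) i + k i) ^ 2)) T
    _ = _ := by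
        rw [← ENNReal.tsum_mul_left]
        refine tsum_congr fun n => ?_
        rw [ennreal_rpow_sum hq0 hq, ← Finset.prod_mul_distrib]
        exact Finset.prod_congr rfl fun j _ => blockTheta_eq_mul_rpow hq0 hq (hl j) (r j) (n.1 j)

end blockTheta

section EtaQuotient

variable {q : ℝ} {l : ℕ}

lemma prod_qPochhammerInf_rpow_half_sub_blockShift (hq0 : 0 < q) (hq1 : q < 1) (hl : l ≠ 0) :
    ∏ i : Fin l, qPochhammerInf (-(q ^ l) ^ (1 / 2 - blockShift l i)) (q ^ l) =
      qPochhammerInf (-q ^ (1 / 2 : ℝ)) q := by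
  have hl' : (l : ℝ) ≠ 0 := Nat.cast_ne_zero.2 hl
  have hpow (i : Fin l) : -(q ^ l) ^ (1 / 2 - blockShift l i) = -q ^ (1 / 2 : ℝ) * q ^ i.val := by
    rw [neg_mul, ← Real.rpow_natCast q i.val, ← Real.rpow_add hq0, ← Real.rpow_natCast q l,
      ← Real.rpow_mul hq0.le, blockShift]
    congr 2
    field_simp
    ring
  simp only [hpow]
  rw [Fin.prod_univ_eq_prod_range fun i => qPochhammerInf (-q ^ (1 / 2 : ℝ) * q ^ i) (q ^ l),
    ← qPochhammerInf_eq_prod _ (by rwa [Real.norm_of_nonneg hq0.le]) hl]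

lemma prod_qPochhammerInf_rpow_half_add_blockShift (hq0 : 0 < q) (hq1 : q < 1) (hl : l ≠ 0) :
    ∏ i : Fin l, qPochhammerInf (-(q ^ l) ^ (1 / 2 + blockShift l i)) (q ^ l) =
      qPochhammerInf (-q ^ (1 / 2 : ℝ)) q := by
  rw [← prod_qPochhammerInf_rpow_half_sub_blockShift hq0 hq1 hl, ← Equiv.prod_comp Fin.revPerm]
  simp only [Fin.revPerm_apply, blockShift_rev, sub_eq_add_neg]

lemma prod_tsum_rpow_blockShift (hq0 : 0 < q) (hq1 : q < 1) (hl : l ≠ 0) :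
    ∏ i : Fin l, ∑' k : ℤ, (q ^ l) ^ ((blockShift l i + k) ^ 2 / 2) =
      (q ^ l) ^ (((l : ℝ) ^ 2 - 1) / (24 * l)) *
        (qPochhammerInf (q ^ l) (q ^ l) ^ l * qPochhammerInf (-q ^ (1 / 2 : ℝ)) q ^ 2) := by
  have hql0 : 0 < q ^ l := pow_pos hq0 l
  rw [pow_two (qPochhammerInf (-q ^ (1 / 2 : ℝ)) q)]
  simp only [jacobi_triple_product hql0 (pow_lt_one₀ hq0.le hq1 hl),
    Finset.prod_mul_distrib, prod_qPochhammerInf_rpow_half_sub_blockShift hq0 hq1 hl,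
    prod_qPochhammerInf_rpow_half_add_blockShift hq0 hq1 hl, Finset.prod_const, Finset.card_univ,
    Fintype.card_fin, ← Real.rpow_sum_of_pos hql0, sum_blockShift_sq hl]

lemma tsum_rpow_sq_div_two (hq0 : 0 < q) (hq1 : q < 1) :
    ∑' n : ℤ, q ^ ((n : ℝ) ^ 2 / 2) =
      qPochhammerInf q q * qPochhammerInf (-q ^ (1 / 2 : ℝ)) q ^ 2 := by
  simpa [pow_two] using jacobi_triple_product hq0 hq1 0

lemma toReal_blockTheta_zero_zero_pow (hq0 : 0 < q) (hq1 : q < 1) (hl : l ≠ 0) :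
    (blockTheta (ENNReal.ofReal (q ^ l)) l 0 0).toReal =
      (q ^ l) ^ (((l : ℝ) ^ 2 - 1) / (24 * l)) * qPochhammerInf (q ^ l) (q ^ l) ^ l /
        qPochhammerInf q q := by
  have hql0 : 0 < q ^ l := pow_pos hq0 l
  have hexp (n : ℤ) : (q ^ l) ^ ((n : ℝ) ^ 2 / (2 * l)) = q ^ ((n : ℝ) ^ 2 / 2) := by
    have hl' : (l : ℝ) ≠ 0 := Nat.cast_ne_zero.2 hl
    rw [← Real.rpow_natCast, ← Real.rpow_mul hq0.le]
    congr 1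
    field_simp
  have htwoways := congrArg ENNReal.toReal (prod_tsum_rpow_eq_mul_blockTheta
    (ENNReal.ofReal_pos.2 hql0).ne' ENNReal.ofReal_ne_top hl)
  simp only [ENNReal.toReal_prod, ENNReal.toReal_mul, toReal_tsum_ofReal_rpow hql0, hexp,
    prod_tsum_rpow_blockShift hq0 hq1 hl, tsum_rpow_sq_div_two hq0 hq1] at htwoways
  have hφ := qPochhammerInf_pos hq1 hq0.le hq1
  have hψ : 0 < qPochhammerInf (-q ^ (1 / 2 : ℝ)) q :=
    qPochhammerInf_pos ((neg_neg_of_pos (Real.rpow_pos_of_pos hq0 _)).trans one_pos) hq0.le hq1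
  rw [eq_div_iff hφ.ne']
  refine mul_right_cancel₀ (pow_pos hψ 2).ne' ?_
  rw [mul_assoc, mul_assoc, htwoways]

theorem toReal_blockTheta_zero_zero (hq0 : 0 < q) (hq1 : q < 1) (hl : l ≠ 0) :
    (blockTheta (ENNReal.ofReal q) l 0 0).toReal =
      q ^ (((l : ℝ) ^ 2 - 1) / (24 * l)) * (∏' k : ℕ, (1 - q ^ (k + 1)) ^ l) /
        ∏' k : ℕ, (1 - q ^ (((k : ℝ) + 1) / l)) := by
  have hl' : (0 : ℝ) < l := Nat.cast_pos.2 hl.bot_lt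
  set Q := q ^ (1 / l : ℝ) with hQ
  have hQ0 : 0 < Q := Real.rpow_pos_of_pos hq0 _
  have hQ1 : Q < 1 := Real.rpow_lt_one hq0.le hq1 (one_div_pos.2 hl')
  have hQpow : Q ^ l = q := by
    rw [hQ, ← Real.rpow_mul_natCast hq0.le, one_div_mul_cancel hl'.ne', Real.rpow_one]
  have hdenominator : ∏' k : ℕ, (1 - q ^ (((k : ℝ) + 1) / l)) = qPochhammerInf Q Q := by
    refine tprod_congr fun k => ?_
    rw [← pow_succ', hQ, ← Real.rpow_mul_natCast hq0.le]
    push_cast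
    ring_nf
  have hQtheta := toReal_blockTheta_zero_zero_pow hQ0 hQ1 hl
  rwa [hQpow, ← hdenominator,
    ← tprod_one_sub_pow_succ_pow (by rwa [Real.norm_of_nonneg hq0.le])] at hQtheta

end EtaQuotient

theorem stmt3_general {ι : Type*} [Fintype ι] (l : ι → ℕ) (hl : ∀ j, 0 < l j) (r : ι → ℝ)
    (T : Set (ι → ℤ)) (q : ℝ) (hq0 : 0 < q) (hq1 : q < 1) :
    (∑' k : {k : ((j : ι) × Fin (l j)) → ℤ // (fun j => ∑ i, k ⟨j, i⟩) ∈ T},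
        q ^ ((1 / 2 : ℝ) * ∑ i : (j : ι) × Fin (l j),
          ((r i.1 + ((l i.1 : ℝ) - 1 - 2 * (i.2.val : ℝ)) / (2 * l i.1)) + (k.1 i : ℝ)) ^ 2)) =
      (∏ j, q ^ (((l j : ℝ) ^ 2 - 1) / (24 * l j)) *
          (∏' k : ℕ, (1 - q ^ (k + 1)) ^ (l j)) /
          ∏' k : ℕ, (1 - q ^ (((k : ℝ) + 1) / (l j)))) *
        (∑' n : {n : ι → ℤ // n ∈ T},
          q ^ (∑ j, ((n.1 j : ℝ) + (l j : ℝ) * r j) ^ 2 / (2 * l j))) := by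
  have hfactor := congrArg ENNReal.toReal (tsum_blockLattice_eq_prod_blockTheta_mul
    (ENNReal.ofReal_pos.2 hq0).ne' ENNReal.ofReal_ne_top (fun j => (hl j).ne') r T)
  rw [ENNReal.toReal_mul, ENNReal.toReal_prod, toReal_tsum_ofReal_rpow hq0,
    toReal_tsum_ofReal_rpow hq0] at hfactor
  simp only [toReal_blockTheta_zero_zero hq0 hq1 (hl _).ne'] at hfactor
  exact hfactor

/-- Factorized (Dedekind-eta) form of the lattice theta function `Θ_{L_S}(v;q)`
    for `v` the concatenation of the blocks `(r_j + (l_j − 1 − 2m)/(2l_j))`,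
    components indexed by the sigma type `(j : Fin K) × Fin (l j)`:
    the `A_{l_j−1}` theta factors are replaced by
    `q^((l_j²−1)/(24 l_j)) · ∏(1−q^k)^{l_j} / ∏(1−q^(k/l_j))`. -/
theorem stmt3 (K : ℕ) (hK : 1 ≤ K) (l : Fin K → ℕ) (hl : ∀ j, 0 < l j)
    (r : Fin K → ℝ) (S : Set ℤ) (q : ℝ) (hq0 : 0 < q) (hq1 : q < 1) :
    (∑' k : {k : ((j : Fin K) × Fin (l j)) → ℤ // (∑ i, k i) ∈ S},
        q ^ ((1 / 2 : ℝ) * ∑ i : (j : Fin K) × Fin (l j),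
          ((r i.1 + ((l i.1 : ℝ) - 1 - 2 * (i.2.val : ℝ)) / (2 * l i.1)) + (k.1 i : ℝ)) ^ 2)) =
      (∏ j : Fin K, q ^ (((l j : ℝ) ^ 2 - 1) / (24 * l j)) *
          (∏' k : ℕ, (1 - q ^ (k + 1)) ^ (l j)) /
          ∏' k : ℕ, (1 - q ^ (((k : ℝ) + 1) / (l j)))) *
        (∑' n : {n : Fin K → ℤ // (∑ j, n j) ∈ S},
          q ^ (∑ j : Fin K, ((n.1 j : ℝ) + (l j : ℝ) * r j) ^ 2 / (2 * l j))) := by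
  rw [← (Equiv.subtypeEquivRight fun k => by rw [Fintype.sum_sigma]).tsum_eq]
  exact stmt3_general l hl r {n | ∑ j, n j ∈ S} q hq0 hq1
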